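/- Let E be a finite set, let F : 2^E → [0,1] be a monotone submodular set function with multilinear extension f, and let x* ∈ [0,1]^E. Suppose y ∈ [0,1]^E satisfies ‖y − x*‖₂ ≤ ρ for some ρ > 0. Then for every x ∈ [0,1]^E, ⟨y, ∇f(x)⟩ ≥ f(x*) − f(x) − 4·|E|^{1/4}·√ρ. -/

import Mathlib

/-!
The multilinear extension is `f(x) = 𝔼[F(S)]` for a random set `S` containing each `e` independently
with probability `x e`, and `∂f/∂x(e) = 𝔼[F(S ∪ {e}) - F(S \ {e})]`. For fixed `R`, submodularity
bounds `F(T)` by the modular function `F(R) + ∑_{e ∈ T} (F(R ∪ {e}) - F(R))` of `T`. Averaging over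
a random `T` with marginals `z` and then over a random `R` with marginals `x` gives
`f(z) ≤ f(x) + ⟨z, ∇f(x)⟩`. As `∇f(x) ∈ [0,1]^E`, replacing `z` by `y` costs at most
`c = √|E| ‖y - z‖₂` by Cauchy–Schwarz. Thus `f(z) - f(x) - ⟨y, ∇f(x)⟩` is at most `c`; it is also at
most `1` because `f` is `[0,1]`-valued and `⟨y, ∇f(x)⟩ ≥ 0`, so it is at most `min 1 c ≤ √c`.
-/

open Finset

/-- The multilinear extension of a set function `F : 2^E → ℝ`. -/
noncomputable def multilinearExt {E : Type*} [Fintype E] [DecidableEq E]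
    (F : Finset E → ℝ) (x : E → ℝ) : ℝ :=
  ∑ S : Finset E, F S * (∏ e ∈ S, x e) * ∏ e ∈ Sᶜ, (1 - x e)

/-- The partial derivative `∂f/∂x(e)` of the multilinear extension at `x`. -/
noncomputable def multilinearGrad {E : Type*} [Fintype E] [DecidableEq E]
    (F : Finset E → ℝ) (x : E → ℝ) (e : E) : ℝ :=
  deriv (fun t => multilinearExt F (Function.update x e t)) (x e)

/-- Submodularity of a set function, in the form of diminishing marginal values. -/
def IsSubmodular {α β : Type*} [DecidableEq α] [Sub β] [LE β] (F : Finset α → β) : Prop :=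
  ∀ S T : Finset α, S ⊆ T → ∀ e ∉ T, F (insert e T) - F T ≤ F (insert e S) - F S

theorem IsSubmodular.union_le_add_sum {α β : Type*} [DecidableEq α] [AddCommGroup β]
    [PartialOrder β] [IsOrderedAddMonoid β] {F : Finset α → β} (hF : IsSubmodular F)
    (R T : Finset α) : F (R ∪ T) ≤ F R + ∑ e ∈ T, (F (insert e R) - F R) := by
  induction T using Finset.induction_on with
  | empty => simp
  | insert a T ha ih =>
    rw [sum_insert ha, union_insert]
    by_cases haR : a ∈ R
    · simpa [haR] using ih
    · have hmarginal := hF R (R ∪ T) subset_union_left a (by simp [haR, ha])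
      calc F (insert a (R ∪ T)) ≤ (F (insert a R) - F R) + F (R ∪ T) :=
            sub_le_iff_le_add.1 hmarginal
        _ ≤ (F (insert a R) - F R) + (F R + ∑ e ∈ T, (F (insert e R) - F R)) := by gcongr
        _ = F R + ((F (insert a R) - F R) + ∑ e ∈ T, (F (insert e R) - F R)) :=
            add_left_comm _ _ _

section MultilinearExt

variable {E : Type*} [Fintype E] [DecidableEq E] {F G : Finset E → ℝ} {x z : E → ℝ} {a b : ℝ}

theorem multilinearExt_add (F G : Finset E → ℝ) (x : E → ℝ) :
    multilinearExt (fun S => F S + G S) x = multilinearExt F x + multilinearExt G x := by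
  simp only [multilinearExt, add_mul, sum_add_distrib]

theorem multilinearExt_sub (F G : Finset E → ℝ) (x : E → ℝ) :
    multilinearExt (fun S => F S - G S) x = multilinearExt F x - multilinearExt G x := by
  simp only [multilinearExt, sub_mul, sum_sub_distrib]

theorem multilinearExt_const_mul (c : ℝ) (F : Finset E → ℝ) (x : E → ℝ) :
    multilinearExt (fun S => c * F S) x = c * multilinearExt F x := by
  simp only [multilinearExt, mul_sum, mul_assoc]

theorem multilinearExt_sum {ι : Type*} (s : Finset ι) (F : ι → Finset E → ℝ) (x : E → ℝ) :
    multilinearExt (fun S => ∑ i ∈ s, F i S) x = ∑ i ∈ s, multilinearExt (F i) x := by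
  simp only [multilinearExt, sum_mul]
  exact sum_comm

theorem multilinearExt_const (c : ℝ) (x : E → ℝ) : multilinearExt (fun _ => c) x = c := by
  simp [multilinearExt, mul_assoc, ← mul_sum, ← Fintype.prod_add]

theorem multilinearExt_mono (hx : ∀ e, x e ∈ Set.Icc (0 : ℝ) 1) (h : ∀ S, F S ≤ G S) :
    multilinearExt F x ≤ multilinearExt G x := by
  refine sum_le_sum fun S _ => ?_
  have hin : 0 ≤ ∏ e ∈ S, x e := prod_nonneg fun e _ => (hx e).1
  have hout : 0 ≤ ∏ e ∈ Sᶜ, (1 - x e) := prod_nonneg fun e _ => sub_nonneg.2 (hx e).2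
  gcongr
  exact h S

theorem multilinearExt_mem_Icc (hx : ∀ e, x e ∈ Set.Icc (0 : ℝ) 1) (hF : ∀ S, F S ∈ Set.Icc a b) :
    multilinearExt F x ∈ Set.Icc a b :=
  ⟨(multilinearExt_const a x).ge.trans (multilinearExt_mono hx fun S => (hF S).1),
    (multilinearExt_mono hx fun S => (hF S).2).trans (multilinearExt_const b x).le⟩

theorem multilinearExt_eq_sum_powerset_compl_singleton (F : Finset E → ℝ) (x : E → ℝ) (e : E) :
    multilinearExt F x = ∑ S ∈ ({e}ᶜ : Finset E).powerset,
      (x e * F (insert e S) + (1 - x e) * F S) *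
        ((∏ i ∈ S, x i) * ∏ i ∈ (insert e S)ᶜ, (1 - x i)) := by
  rw [multilinearExt, ← powerset_univ, ← insert_compl_self e, sum_powerset_insert (by simp),
    ← sum_add_distrib]
  refine sum_congr rfl fun S hS => ?_
  have he : e ∉ S := by simpa [subset_compl_singleton] using hS
  rw [← insert_compl_insert he, prod_insert he, prod_insert (by simp)]
  ring

theorem multilinearExt_update (F : Finset E → ℝ) (x : E → ℝ) (e : E) (t : ℝ) :
    multilinearExt F (Function.update x e t) =
      t * multilinearExt (fun S => F (insert e S)) x +
        (1 - t) * multilinearExt (fun S => F (S.erase e)) x := by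
  simp only [multilinearExt_eq_sum_powerset_compl_singleton _ _ e, mul_sum, ← sum_add_distrib]
  refine sum_congr rfl fun S hS => ?_
  have he : e ∉ S := by simpa [subset_compl_singleton] using hS
  have hin : ∏ i ∈ S, Function.update x e t i = ∏ i ∈ S, x i := prod_update_of_notMem he x t
  have hout : ∏ i ∈ (insert e S)ᶜ, (1 - Function.update x e t i) =
      ∏ i ∈ (insert e S)ᶜ, (1 - x i) :=
    prod_congr rfl fun i hi => by
      rw [Function.update_of_ne (by rintro rfl; simp at hi)]
  rw [hin, hout, Function.update_self, insert_idem, erase_insert he, erase_eq_of_notMem he]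
  ring

theorem multilinearExt_indicator_mem (e : E) (x : E → ℝ) :
    multilinearExt (fun S => if e ∈ S then 1 else 0) x = x e := by
  simpa [multilinearExt_const] using
    multilinearExt_update (fun S => if e ∈ S then (1 : ℝ) else 0) x e (x e)

theorem multilinearExt_modular (w x : E → ℝ) :
    multilinearExt (fun S => ∑ e ∈ S, w e) x = ∑ e, w e * x e := by
  calc multilinearExt (fun S => ∑ e ∈ S, w e) x
      = multilinearExt (fun S => ∑ e, w e * if e ∈ S then 1 else 0) x := by simp
    _ = ∑ e, w e * x e := by
        simp only [multilinearExt_sum, multilinearExt_const_mul, multilinearExt_indicator_mem]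

theorem multilinearGrad_eq_multilinearExt (F : Finset E → ℝ) (x : E → ℝ) (e : E) :
    multilinearGrad F x e = multilinearExt (fun S => F (insert e S) - F (S.erase e)) x := by
  have haffine : (fun t => multilinearExt F (Function.update x e t)) = fun t =>
      t * multilinearExt (fun S => F (insert e S) - F (S.erase e)) x +
        multilinearExt (fun S => F (S.erase e)) x := by
    funext t
    rw [multilinearExt_update, multilinearExt_sub]
    ring
  simp [multilinearGrad, haffine]

theorem multilinearGrad_mem_Icc (hmono : Monotone F) (hF : ∀ S, F S ∈ Set.Icc a b)
    (hx : ∀ e, x e ∈ Set.Icc (0 : ℝ) 1) (e : E) : multilinearGrad F x e ∈ Set.Icc 0 (b - a) := by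
  rw [multilinearGrad_eq_multilinearExt]
  exact multilinearExt_mem_Icc hx fun S =>
    ⟨sub_nonneg.2 (hmono ((erase_subset e S).trans (subset_insert e S))),
      sub_le_sub (hF _).2 (hF _).1⟩

theorem multilinearExt_marginal_le_multilinearGrad (hmono : Monotone F)
    (hx : ∀ e, x e ∈ Set.Icc (0 : ℝ) 1) (e : E) :
    multilinearExt (fun S => F (insert e S) - F S) x ≤ multilinearGrad F x e := by
  rw [multilinearGrad_eq_multilinearExt]
  exact multilinearExt_mono hx fun S => sub_le_sub_left (hmono (erase_subset e S)) _

theorem IsSubmodular.multilinearExt_le_add_sum_marginal (hsub : IsSubmodular F)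
    (hmono : Monotone F) (hz : ∀ e, z e ∈ Set.Icc (0 : ℝ) 1) (R : Finset E) :
    multilinearExt F z ≤ F R + ∑ e, z e * (F (insert e R) - F R) := by
  calc multilinearExt F z
      ≤ multilinearExt (fun T => F R + ∑ e ∈ T, (F (insert e R) - F R)) z :=
        multilinearExt_mono hz fun T => (hmono subset_union_right).trans (hsub.union_le_add_sum R T)
    _ = F R + ∑ e, z e * (F (insert e R) - F R) := by
        simp only [multilinearExt_add, multilinearExt_const, multilinearExt_modular, mul_comm]

theorem IsSubmodular.multilinearExt_le_add_inner_grad (hsub : IsSubmodular F) (hmono : Monotone F)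
    (hz : ∀ e, z e ∈ Set.Icc (0 : ℝ) 1) (hx : ∀ e, x e ∈ Set.Icc (0 : ℝ) 1) :
    multilinearExt F z ≤ multilinearExt F x + ∑ e, z e * multilinearGrad F x e := by
  calc multilinearExt F z
      = multilinearExt (fun _ => multilinearExt F z) x := (multilinearExt_const _ _).symm
    _ ≤ multilinearExt (fun R => F R + ∑ e, z e * (F (insert e R) - F R)) x :=
        multilinearExt_mono hx (hsub.multilinearExt_le_add_sum_marginal hmono hz)
    _ = multilinearExt F x + ∑ e, z e * multilinearExt (fun R => F (insert e R) - F R) x := by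
        simp only [multilinearExt_add, multilinearExt_sum, multilinearExt_const_mul]
    _ ≤ multilinearExt F x + ∑ e, z e * multilinearGrad F x e := by
        gcongr with e
        · exact (hz e).1
        · exact multilinearExt_marginal_le_multilinearGrad hmono hx e

theorem sqrt_sum_sq_multilinearGrad_le (hmono : Monotone F) (hF : ∀ S, F S ∈ Set.Icc a b)
    (hx : ∀ e, x e ∈ Set.Icc (0 : ℝ) 1) :
    √(∑ e, multilinearGrad F x e ^ 2) ≤ √(Fintype.card E) * (b - a) := by
  have hab : 0 ≤ b - a := sub_nonneg.2 ((hF ∅).1.trans (hF ∅).2)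
  refine Real.sqrt_le_iff.2 ⟨by positivity, ?_⟩
  calc ∑ e, multilinearGrad F x e ^ 2 ≤ ∑ _e : E, (b - a) ^ 2 := by
        gcongr with e
        · exact (multilinearGrad_mem_Icc hmono hF hx e).1
        · exact (multilinearGrad_mem_Icc hmono hF hx e).2
    _ = (√(Fintype.card E) * (b - a)) ^ 2 := by simp [mul_pow]

theorem IsSubmodular.multilinearExt_le_add_inner_grad_add_dist (hsub : IsSubmodular F)
    (hmono : Monotone F) (hF : ∀ S, F S ∈ Set.Icc a b) (hz : ∀ e, z e ∈ Set.Icc (0 : ℝ) 1)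
    (hx : ∀ e, x e ∈ Set.Icc (0 : ℝ) 1) (y : E → ℝ) :
    multilinearExt F z ≤ multilinearExt F x + ∑ e, y e * multilinearGrad F x e +
      √(∑ e, (y e - z e) ^ 2) * (√(Fintype.card E) * (b - a)) := by
  have hcauchy : ∑ e, (z e - y e) * multilinearGrad F x e ≤
      √(∑ e, (y e - z e) ^ 2) * (√(Fintype.card E) * (b - a)) := by
    calc ∑ e, (z e - y e) * multilinearGrad F x e
        ≤ √(∑ e, (z e - y e) ^ 2) * √(∑ e, multilinearGrad F x e ^ 2) :=
          Real.sum_mul_le_sqrt_mul_sqrt _ _ _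
      _ ≤ √(∑ e, (y e - z e) ^ 2) * (√(Fintype.card E) * (b - a)) := by
          simp only [sub_sq_comm (z _)]
          gcongr
          exact sqrt_sum_sq_multilinearGrad_le hmono hF hx
  have hfirst := hsub.multilinearExt_le_add_inner_grad hmono hz hx
  simp only [sub_mul, sum_sub_distrib] at hcauchy
  linarith

end MultilinearExt

theorem le_sqrt_of_le_one_of_le {s c : ℝ} (hs : s ≤ 1) (hsc : s ≤ c) : s ≤ √c := by
  rcases le_total s 0 with h | h
  · exact h.trans (Real.sqrt_nonneg c)
  · exact Real.le_sqrt_of_sq_le ((sq_le h hs).trans hsc)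

theorem rpow_one_fourth_mul_sqrt {r : ℝ} (hr : 0 ≤ r) (s : ℝ) :
    r ^ ((1 : ℝ) / 4) * √s = √(√r * s) := by
  rw [Real.sqrt_mul (Real.sqrt_nonneg r), Real.sqrt_eq_rpow √r, Real.sqrt_eq_rpow r,
    ← Real.rpow_mul hr]
  norm_num

theorem inner_grad_ge_of_near_opt_general {E : Type*} [Fintype E] [DecidableEq E]
    {F : Finset E → ℝ} (hF : ∀ S, F S ∈ Set.Icc (0 : ℝ) 1) (hmono : Monotone F)
    (hsub : IsSubmodular F) {xstar y x : E → ℝ} {ρ : ℝ}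
    (hxstar : ∀ e, xstar e ∈ Set.Icc (0 : ℝ) 1) (hy : ∀ e, 0 ≤ y e)
    (hx : ∀ e, x e ∈ Set.Icc (0 : ℝ) 1) (hdist : √(∑ e, (y e - xstar e) ^ 2) ≤ ρ) :
    multilinearExt F xstar - multilinearExt F x -
        (Fintype.card E : ℝ) ^ ((1 : ℝ) / 4) * √ρ ≤
      ∑ e, y e * multilinearGrad F x e := by
  have hinner : 0 ≤ ∑ e, y e * multilinearGrad F x e :=
    sum_nonneg fun e _ => mul_nonneg (hy e) (multilinearGrad_mem_Icc hmono hF hx e).1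
  have hgap_one : multilinearExt F xstar - multilinearExt F x -
      ∑ e, y e * multilinearGrad F x e ≤ 1 := by
    linarith [(multilinearExt_mem_Icc hxstar hF).2, (multilinearExt_mem_Icc hx hF).1]
  have hgap_dist : multilinearExt F xstar - multilinearExt F x -
      ∑ e, y e * multilinearGrad F x e ≤ √(Fintype.card E) * ρ := by
    have hfirst := hsub.multilinearExt_le_add_inner_grad_add_dist hmono hF hxstar hx y
    have hscale := mul_le_mul_of_nonneg_left hdist (Real.sqrt_nonneg (Fintype.card E))
    linarith
  have hgap := le_sqrt_of_le_one_of_le hgap_one hgap_dist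
  rw [rpow_one_fourth_mul_sqrt (Nat.cast_nonneg _)]
  linarith

/-- For a monotone submodular `F : 2^E → [0,1]` with multilinear extension `f`:
if `‖y − x*‖₂ ≤ ρ` with `y ∈ [0,1]^E`, then for every `x ∈ [0,1]^E`,
`⟨y, ∇f(x)⟩ ≥ f(x*) − f(x) − 4 |E|^{1/4} √ρ`. -/
theorem inner_grad_ge_of_near_opt {E : Type*} [Fintype E] [DecidableEq E]
    (F : Finset E → ℝ) (hF : ∀ S, F S ∈ Set.Icc (0 : ℝ) 1)
    (hmono : ∀ S T : Finset E, S ⊆ T → F S ≤ F T)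
    (hsub : ∀ S T : Finset E, S ⊆ T → ∀ e ∉ T,
      F (insert e T) - F T ≤ F (insert e S) - F S)
    (xstar y x : E → ℝ) (ρ : ℝ) (hρ : 0 < ρ)
    (hxstar : ∀ e, xstar e ∈ Set.Icc (0 : ℝ) 1)
    (hy : ∀ e, y e ∈ Set.Icc (0 : ℝ) 1)
    (hx : ∀ e, x e ∈ Set.Icc (0 : ℝ) 1)
    (hdist : Real.sqrt (∑ e, (y e - xstar e) ^ 2) ≤ ρ) :
    multilinearExt F xstar - multilinearExt F x -
        4 * (Fintype.card E : ℝ) ^ ((1 : ℝ) / 4) * Real.sqrt ρ ≤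
      ∑ e, y e * multilinearGrad F x e := by
  refine le_trans ?_ (inner_grad_ge_of_near_opt_general hF (fun S T => hmono S T) hsub hxstar
    (fun e => (hy e).1) hx hdist)
  gcongr
  linarith [show 0 ≤ (Fintype.card E : ℝ) ^ ((1 : ℝ) / 4) by positivity]
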